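/- Let H be a real Hilbert space, φ : ℝⁿ → H a feature map, and data (xⱼ, Aⱼ, bⱼ) for j = 1, …, N with xⱼ ∈ ℝⁿ, Aⱼ a real m×n matrix, and bⱼ ∈ ℝᵐ. Let K ∈ ℝ^{N×N} be the kernel matrix K_{j,l} = ⟨φ(xⱼ), φ(x_l)⟩, and fix κ ≥ 0. Then the following two feasibility problems are equivalent: (I) there exist f₁, …, f_n ∈ H, y₁, …, y_N ∈ ℝᵐ and ε ∈ ℝᴺ with ε ≥ 0 and ‖ε‖ ≤ κ such that (Aⱼᵀyⱼ)ᵢ ≤ ⟨φ(xⱼ), fᵢ⟩ for all i, j, Σ_{i=1}^n (xⱼ)ᵢ ⟨φ(xⱼ), fᵢ⟩ − ⟨bⱼ, yⱼ⟩ ≤ εⱼ for all j, and (1/N) Σ_{j=1}^N Σ_{i=1}^n (xⱼ)ᵢ ⟨φ(xⱼ), fᵢ⟩ = 1; (II) there exist α ∈ ℝ^{n×N}, y₁, …, y_N ∈ ℝᵐ and ε ∈ ℝᴺ with ε ≥ 0 and ‖ε‖ ≤ κ such that Aⱼᵀyⱼ ≤ αK eⱼ componentwise for all j, xⱼᵀ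 αK eⱼ − ⟨bⱼ, yⱼ⟩ ≤ εⱼ for all j, and (1/N) Σ_{j=1}^N xⱼᵀ αK eⱼ = 1. Moreover, the correspondence fᵢ = Σ_{j=1}^N α_{i,j} φ(xⱼ) maps feasible solutions of (II) to feasible solutions of (I) with Σᵢ ‖fᵢ‖² = Σᵢ eᵢᵀ α K αᵀ eᵢ. -/

import Mathlib

/-!
Problem (I) sees each `f i` only through the values `⟪φ (x j), f i⟫`. For
`f i = ∑ l, α i l • φ (x l)` these values are the entries of `α * K` (`inner_comb_eq_mul`), so every
solution of (II) yields one of (I). Conversely, the orthogonal projection of `f i` onto the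
finite-dimensional span of the `φ (x l)` has the same values as `f i` and is such a combination
(`exists_comb_inner_eq`, the representer argument).
The norm identity is the expansion of `‖f i‖ ^ 2` as a quadratic form in the Gram matrix.
-/

open RealInnerProductSpace Matrix

/-- Pairings with a fixed finite family `v` are realised by an element of its span. Projecting onto
the span needs no completeness of `H`, since the span is finite-dimensional. -/
lemma exists_comb_inner_eq {H : Type*} [NormedAddCommGroup H] [InnerProductSpace ℝ H]
    {N : ℕ} (v : Fin N → H) (f : H) :
    ∃ c : Fin N → ℝ, ∀ j, ⟪v j, f⟫ = ⟪v j, (∑ l, c l • v l)⟫ := by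
  let S : Submodule ℝ H := Submodule.span ℝ (Set.range v)
  haveI : FiniteDimensional ℝ S := FiniteDimensional.span_of_finite ℝ (Set.finite_range v)
  have hmem : S.starProjection f ∈ S := S.starProjection_apply_mem f
  obtain ⟨c, hc⟩ := (Submodule.mem_span_range_iff_exists_fun ℝ).1 hmem
  refine ⟨c, fun j => ?_⟩
  have h := S.sub_starProjection_mem_orthogonal f (v j) (Submodule.subset_span ⟨j, rfl⟩)
  rw [inner_sub_right, sub_eq_zero] at h
  rw [hc, h]

lemma inner_comb_eq_mul {H : Type*} [NormedAddCommGroup H] [InnerProductSpace ℝ H]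
    {n N : ℕ} (v : Fin N → H) (K : Matrix (Fin N) (Fin N) ℝ) (hK : ∀ j l, K j l = ⟪v j, v l⟫)
    (α : Matrix (Fin n) (Fin N) ℝ) (i : Fin n) (j : Fin N) :
    ⟪v j, (∑ l, α i l • v l)⟫ = (α * K) i j := by
  rw [inner_sum, Matrix.mul_apply]
  refine Finset.sum_congr rfl fun l _ => ?_
  rw [real_inner_smul_right, hK, real_inner_comm]

theorem stmt5 {H : Type*} [NormedAddCommGroup H] [InnerProductSpace ℝ H]
    {n m N : ℕ} (hN : 0 < N)
    (φ : EuclideanSpace ℝ (Fin n) → H)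
    (x : Fin N → EuclideanSpace ℝ (Fin n))
    (A : Fin N → Matrix (Fin m) (Fin n) ℝ) (b : Fin N → Fin m → ℝ)
    (K : Matrix (Fin N) (Fin N) ℝ) (hK : ∀ j l, K j l = ⟪φ (x j), φ (x l)⟫)
    (κ : ℝ) (hκ : 0 ≤ κ) :
    -- equivalence of the two feasibility problems
    ((∃ (f : Fin n → H) (y : Fin N → Fin m → ℝ) (ε : EuclideanSpace ℝ (Fin N)),
        (∀ j, 0 ≤ ε j) ∧ ‖ε‖ ≤ κ ∧
        (∀ i j, ((A j)ᵀ.mulVec (y j)) i ≤ ⟪φ (x j), f i⟫) ∧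
        (∀ j, (∑ i, x j i * ⟪φ (x j), f i⟫) - b j ⬝ᵥ y j ≤ ε j) ∧
        (1 / (N : ℝ)) * ∑ j, ∑ i, x j i * ⟪φ (x j), f i⟫ = 1) ↔
      (∃ (α : Matrix (Fin n) (Fin N) ℝ) (y : Fin N → Fin m → ℝ)
          (ε : EuclideanSpace ℝ (Fin N)),
        (∀ j, 0 ≤ ε j) ∧ ‖ε‖ ≤ κ ∧
        (∀ i j, ((A j)ᵀ.mulVec (y j)) i ≤ (α * K) i j) ∧
        (∀ j, (∑ i, x j i * (α * K) i j) - b j ⬝ᵥ y j ≤ ε j) ∧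
        (1 / (N : ℝ)) * ∑ j, ∑ i, x j i * (α * K) i j = 1)) ∧
    -- the correspondence maps feasible solutions of (II) to feasible solutions of (I)
    (∀ (α : Matrix (Fin n) (Fin N) ℝ) (y : Fin N → Fin m → ℝ)
        (ε : EuclideanSpace ℝ (Fin N)),
      (∀ j, 0 ≤ ε j) → ‖ε‖ ≤ κ →
      (∀ i j, ((A j)ᵀ.mulVec (y j)) i ≤ (α * K) i j) →
      (∀ j, (∑ i, x j i * (α * K) i j) - b j ⬝ᵥ y j ≤ ε j) →
      (1 / (N : ℝ)) * ∑ j, ∑ i, x j i * (α * K) i j = 1 →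
      ((∀ i j, ((A j)ᵀ.mulVec (y j)) i ≤ ⟪φ (x j), (∑ l, α i l • φ (x l))⟫) ∧
       (∀ j, (∑ i, x j i * ⟪φ (x j), (∑ l, α i l • φ (x l))⟫) - b j ⬝ᵥ y j ≤ ε j) ∧
       (1 / (N : ℝ)) * ∑ j, ∑ i, x j i * ⟪φ (x j), (∑ l, α i l • φ (x l))⟫ = 1 ∧
       (∑ i, ‖∑ l, α i l • φ (x l)‖ ^ 2) = ∑ i, (α * K * αᵀ) i i)) := by
  have hin := inner_comb_eq_mul (n := n) (fun j => φ (x j)) K hK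
  refine ⟨⟨?_, ?_⟩, ?_⟩
  · rintro ⟨f, y, ε, h0, h1, h2, h3, h4⟩
    choose α hα using fun i => exists_comb_inner_eq (fun j => φ (x j)) (f i)
    have hf : ∀ i j, ⟪φ (x j), f i⟫ = (Matrix.of α * K) i j := fun i j =>
      (hα i j).trans (hin (Matrix.of α) i j)
    simp only [hf] at h2 h3 h4
    exact ⟨Matrix.of α, y, ε, h0, h1, h2, h3, h4⟩
  · rintro ⟨α, y, ε, h0, h1, h2, h3, h4⟩
    refine ⟨fun i => ∑ l, α i l • φ (x l), y, ε, h0, h1, ?_⟩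
    simp only [hin]
    exact ⟨h2, h3, h4⟩
  · intro α y ε _ _ h2 h3 h4
    simp only [hin]
    refine ⟨h2, h3, h4, Finset.sum_congr rfl fun i _ => ?_⟩
    rw [← real_inner_self_eq_norm_sq, sum_inner, Matrix.mul_apply]
    refine Finset.sum_congr rfl fun l _ => ?_
    rw [real_inner_smul_left, hin α i l, Matrix.transpose_apply, mul_comm]
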